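/- The explicit 36×36 matrix A over ZMod 3 given in the Appendix (second matrix, with rows such as 1 1 1 1 1 1 1 0 0 0 0 0 1 1 1 1 1 1 1 1 0 0 0 0 0 0 0 0 0 0 0 0 0 0 0 0, reading each block as the set of column indices with entry 1) is the incidence matrix of a symmetric 2-(36,15,6) design: every row has exactly 15 ones and every two distinct columns share a one in exactly 6 common rows; moreover the F₃-row span of A is a self-dual ternary code of length 36 with minimum weight 9 having exactly 120 codewords of weight 9. -/

import Mathlib

/-- `C` is a self-dual ternary code of length 36: it coincides with its orthogonal
complement with respect to the standard dot product on `(ZMod 3)^36`. -/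
def IsSelfDualCode (C : Submodule (ZMod 3) (Fin 36 → ZMod 3)) : Prop :=
  ∀ x : Fin 36 → ZMod 3, x ∈ C ↔ ∀ y ∈ C, ∑ i, x i * y i = 0

/-- The minimum (Hamming) weight of `C` is 9, i.e. `C` is near-extremal. -/
def MinWeightNine (C : Submodule (ZMod 3) (Fin 36 → ZMod 3)) : Prop :=
  IsLeast {w : ℕ | ∃ x ∈ C, x ≠ 0 ∧ hammingNorm x = w} 9

/-- The number of codewords of `C` of Hamming weight exactly 9. -/
noncomputable def A9 (C : Submodule (ZMod 3) (Fin 36 → ZMod 3)) : ℕ :=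
  Nat.card {x : Fin 36 → ZMod 3 // x ∈ C ∧ hammingNorm x = 9}

/-- The rows of the incidence matrix from the Appendix of the paper. -/
def rows120 : List (List ℕ) :=
  [[1, 1, 1, 1, 1, 1, 1, 0, 0, 0, 0, 0, 1, 1, 1, 1, 1, 1, 1, 1, 0, 0, 0, 0, 0, 0, 0, 0, 0, 0, 0, 0, 0, 0, 0, 0],
   [1, 1, 1, 1, 0, 0, 0, 1, 1, 1, 0, 0, 1, 1, 0, 0, 0, 0, 0, 0, 1, 1, 1, 1, 1, 1, 0, 0, 0, 0, 0, 0, 0, 0, 0, 0],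
   [1, 1, 1, 0, 1, 0, 0, 1, 0, 0, 1, 1, 1, 1, 0, 0, 0, 0, 0, 0, 0, 0, 0, 0, 0, 0, 1, 1, 1, 1, 1, 1, 0, 0, 0, 0],
   [1, 1, 1, 0, 0, 0, 1, 0, 0, 0, 0, 0, 0, 0, 1, 0, 0, 0, 1, 0, 1, 0, 1, 0, 1, 0, 1, 0, 1, 0, 1, 0, 1, 0, 1, 1],
   [1, 1, 1, 0, 0, 0, 1, 0, 0, 0, 0, 0, 0, 0, 0, 1, 0, 0, 0, 1, 0, 1, 0, 1, 0, 1, 0, 1, 0, 1, 0, 1, 0, 1, 1, 1],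
   [1, 1, 0, 1, 0, 1, 0, 0, 1, 0, 1, 1, 0, 0, 1, 1, 0, 0, 0, 0, 1, 1, 0, 0, 0, 0, 1, 1, 0, 0, 0, 0, 1, 1, 0, 0],
   [1, 0, 1, 0, 1, 1, 0, 0, 1, 1, 1, 0, 0, 0, 0, 0, 1, 1, 0, 0, 1, 1, 0, 0, 0, 0, 0, 0, 1, 1, 0, 0, 0, 0, 1, 1],
   [1, 0, 0, 1, 1, 1, 0, 1, 0, 1, 0, 1, 0, 0, 1, 1, 0, 0, 0, 0, 0, 0, 1, 1, 0, 0, 0, 0, 0, 0, 1, 1, 0, 0, 1, 1],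
   [1, 0, 0, 1, 0, 1, 0, 0, 0, 0, 1, 0, 1, 0, 0, 0, 1, 0, 1, 0, 0, 0, 1, 0, 1, 1, 0, 1, 0, 1, 1, 0, 0, 1, 1, 0],
   [1, 0, 0, 1, 0, 1, 0, 0, 0, 0, 1, 0, 0, 1, 0, 0, 0, 1, 0, 1, 0, 0, 0, 1, 1, 1, 1, 0, 1, 0, 0, 1, 1, 0, 0, 1],
   [1, 0, 0, 0, 1, 0, 0, 1, 1, 0, 0, 0, 0, 0, 1, 0, 0, 1, 1, 1, 0, 1, 1, 0, 1, 0, 0, 1, 1, 0, 0, 1, 0, 1, 0, 0],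
   [1, 0, 0, 0, 1, 0, 0, 1, 1, 0, 0, 0, 0, 0, 0, 1, 1, 0, 1, 1, 1, 0, 0, 1, 0, 1, 1, 0, 0, 1, 1, 0, 1, 0, 0, 0],
   [1, 0, 0, 0, 0, 0, 1, 1, 1, 1, 1, 1, 1, 1, 0, 0, 0, 0, 1, 1, 0, 0, 0, 0, 0, 0, 0, 0, 0, 0, 0, 0, 1, 1, 1, 1],
   [1, 0, 0, 0, 0, 0, 1, 0, 0, 1, 0, 1, 1, 0, 0, 1, 1, 1, 0, 0, 1, 0, 1, 0, 0, 1, 0, 1, 1, 0, 0, 1, 1, 0, 0, 0],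
   [1, 0, 0, 0, 0, 0, 1, 0, 0, 1, 0, 1, 0, 1, 1, 0, 1, 1, 0, 0, 0, 1, 0, 1, 1, 0, 1, 0, 0, 1, 1, 0, 0, 1, 0, 0],
   [0, 1, 1, 0, 0, 1, 1, 1, 1, 0, 1, 0, 0, 0, 0, 0, 1, 1, 0, 0, 0, 0, 1, 1, 0, 0, 0, 0, 0, 0, 1, 1, 1, 1, 0, 0],
   [0, 1, 0, 1, 1, 0, 1, 1, 1, 0, 0, 1, 0, 0, 0, 0, 1, 1, 0, 0, 0, 0, 0, 0, 1, 1, 1, 1, 0, 0, 0, 0, 0, 0, 1, 1],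
   [0, 1, 0, 1, 1, 0, 0, 0, 0, 1, 0, 0, 1, 0, 0, 0, 1, 0, 1, 0, 0, 1, 0, 1, 0, 0, 1, 0, 1, 0, 0, 1, 1, 1, 1, 0],
   [0, 1, 0, 1, 1, 0, 0, 0, 0, 1, 0, 0, 0, 1, 0, 0, 0, 1, 0, 1, 1, 0, 1, 0, 0, 0, 0, 1, 0, 1, 1, 0, 1, 1, 0, 1],
   [0, 1, 0, 0, 1, 1, 1, 0, 0, 1, 1, 1, 0, 0, 0, 0, 0, 0, 1, 1, 1, 1, 0, 0, 1, 1, 0, 0, 0, 0, 1, 1, 0, 0, 0, 0],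
   [0, 1, 0, 0, 0, 1, 0, 1, 0, 0, 0, 1, 1, 0, 0, 1, 0, 1, 1, 0, 1, 0, 0, 1, 1, 0, 0, 0, 1, 1, 0, 0, 0, 1, 0, 1],
   [0, 1, 0, 0, 0, 1, 0, 1, 0, 0, 0, 1, 0, 1, 1, 0, 1, 0, 0, 1, 0, 1, 1, 0, 0, 1, 0, 0, 1, 1, 0, 0, 1, 0, 1, 0],
   [0, 1, 0, 0, 0, 0, 0, 0, 1, 1, 1, 0, 1, 0, 1, 1, 1, 0, 0, 1, 0, 0, 1, 0, 1, 0, 1, 0, 0, 1, 0, 1, 0, 0, 0, 1],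
   [0, 1, 0, 0, 0, 0, 0, 0, 1, 1, 1, 0, 0, 1, 1, 1, 0, 1, 1, 0, 0, 0, 0, 1, 0, 1, 0, 1, 1, 0, 1, 0, 0, 0, 1, 0],
   [0, 0, 1, 1, 1, 0, 1, 1, 0, 1, 1, 0, 0, 0, 1, 1, 0, 0, 0, 0, 0, 0, 0, 0, 1, 1, 0, 0, 1, 1, 0, 0, 1, 1, 0, 0],
   [0, 0, 1, 1, 0, 1, 1, 0, 1, 1, 0, 1, 0, 0, 0, 0, 0, 0, 1, 1, 0, 0, 1, 1, 0, 0, 1, 1, 1, 1, 0, 0, 0, 0, 0, 0],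
   [0, 0, 1, 1, 0, 0, 0, 0, 1, 0, 0, 1, 1, 0, 1, 0, 0, 1, 1, 0, 0, 1, 0, 0, 0, 1, 0, 0, 0, 1, 1, 1, 1, 0, 0, 1],
   [0, 0, 1, 1, 0, 0, 0, 0, 1, 0, 0, 1, 0, 1, 0, 1, 1, 0, 0, 1, 1, 0, 0, 0, 1, 0, 0, 0, 1, 0, 1, 1, 0, 1, 1, 0],
   [0, 0, 1, 0, 1, 0, 0, 0, 0, 0, 1, 1, 1, 0, 1, 0, 0, 1, 0, 1, 1, 0, 1, 1, 0, 1, 1, 0, 0, 0, 0, 0, 0, 1, 1, 0],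
   [0, 0, 1, 0, 1, 0, 0, 0, 0, 0, 1, 1, 0, 1, 0, 1, 1, 0, 1, 0, 0, 1, 1, 1, 1, 0, 0, 1, 0, 0, 0, 0, 1, 0, 0, 1],
   [0, 0, 1, 0, 0, 1, 0, 1, 0, 1, 0, 0, 1, 0, 0, 1, 0, 1, 0, 1, 0, 1, 0, 0, 1, 0, 1, 1, 0, 0, 1, 0, 1, 0, 1, 0],
   [0, 0, 1, 0, 0, 1, 0, 1, 0, 1, 0, 0, 0, 1, 1, 0, 1, 0, 1, 0, 1, 0, 0, 0, 0, 1, 1, 1, 0, 0, 0, 1, 0, 1, 0, 1],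
   [0, 0, 0, 1, 0, 0, 1, 1, 0, 0, 1, 0, 1, 0, 1, 0, 1, 0, 0, 1, 1, 1, 0, 1, 0, 0, 0, 1, 1, 0, 1, 0, 0, 0, 0, 1],
   [0, 0, 0, 1, 0, 0, 1, 1, 0, 0, 1, 0, 0, 1, 0, 1, 0, 1, 1, 0, 1, 1, 1, 0, 0, 0, 1, 0, 0, 1, 0, 1, 0, 0, 1, 0],
   [0, 0, 0, 0, 1, 1, 1, 0, 1, 0, 0, 0, 1, 1, 1, 0, 0, 0, 0, 0, 1, 0, 0, 1, 1, 0, 0, 1, 0, 1, 0, 1, 1, 0, 1, 0],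
   [0, 0, 0, 0, 1, 1, 1, 0, 1, 0, 0, 0, 1, 1, 0, 1, 0, 0, 0, 0, 0, 1, 1, 0, 0, 1, 1, 0, 1, 0, 1, 0, 0, 1, 0, 1]]

/-- The incidence matrix `A` from the Appendix, as a matrix over `ZMod 3`. -/
def A120 : Matrix (Fin 36) (Fin 36) (ZMod 3) :=
  fun i j => (((rows120.getD i []).getD j 0 : ℕ) : ZMod 3)

/-- The `F₃`-row span of the matrix `A120`. -/
def C120 : Submodule (ZMod 3) (Fin 36 → ZMod 3) :=
  Submodule.span (ZMod 3) (Set.range fun i => A120 i)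

namespace T36
def TI : List (Fin 36) := [0, 1, 2, 3, 4, 5, 6, 7, 8, 9, 10, 11, 12, 14, 16, 18, 20, 22]
def TJ : List (Fin 36) := [13, 15, 17, 19, 21, 23, 24, 25, 26, 27, 28, 29, 30, 31, 32, 33, 34, 35]
def RL : List ℕ :=
  [21098857075950970643449660137803841,
   1449902417965908006221662289901018253522899009,
   99636535480878363674644571282856435823326173736122454081,
   1671221844663955049895608505557025745002162057739800403771396161,
   1671617398644080339809588065456673962883631542698634943095902273,
   408011612806071600051069505433428063494229090510049881882689,
   1671215566053669273808826886993543298089585230081799143991283713,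
   1671215665641560042846770262988963648652472884548085963766890497,
   26112744775655223125578461805098743476912194620218459342241793,
   1645510932503030281465525884678467784539667772168755558001934337,
   401832591159353433784735024119851328032997315510256145530881,
   6278658176263144130683941060499129939540478136323630170113,
   1671623577642150020813289902368411310928242532658484518930350081,
   6375181829993950609944035429666269835606525677418168975361,
   401736067505622627305474887568422043411985398898764281806849,
   408111225010290532779013266668188919708926248813170897457216,
   1671215566029355825363590670732409963123109212125221215782830144,
   26119118401032829838565233267312737627695090641719320912330816,
   1645912570490452806103091650119601006325819890284502566811467840,
   99612210157732324317617960700977248173886462767147253824,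
   1645906291856590176991690093311160361556807627686798812843606080,
   25717285834198619761874676140982737913434492124087766438903872,
   1645504655424865991764044153822012428708589775976356648469921856,
   25711010241019377127862428444555099305687554821604136955412544,
   408011637119522944383988775908319390550143843263089240969216,
   24325324595941775034706000075831579984748488136331264,
   1645510934059096829371786102828060850186781268406220911515275264,
   26112842831792892701790134988688687205253862802501946893930496,
   26112743219208684749010804899536190922379429213633055704485888,
   1645510834422947274864937065889491255786699613500434690720403456,
   25717287342380709328026574708230651577350012992385757560705024,
   1645906389911991343918390958843263210367454905812276201480261632,
   1645504558854081573446912611238746523877318878594601063538753536,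
   25711106811803793995445705922969950718917389540336905308340224,
   25717383913544935361550196896099193897801401691362082619916288,
   1645906293365140567780005798061697701377717255615399580208726016]
def cL : List ℕ :=
  [19649841893418734522208321,
   353980082516359077834852047416954846449729,
   99636535482327912112549061788293890521572408853199589441,
   408011612806073049599421010433873370723104652828021341814849,
   1671215566053669273831127545813347901199387020616578615639805953,
   1671215665641560044273664148453914667143085106766904146794643457,
   1671623577642150022262838340272577377059851085359198656356679681,
   408111225010290554725951203415692714318396198143319485714496,
   1671215566029355825341643819195472046619119253331194683588608064,
   99612210157732678124879743821581768949625651667413237824,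
   408011637119521517490189752315401749067302599623353344987136,
   24325326022835660478563391845801159257480696061497344,
   1671221844663955049873307760358175673890332966365808739458486337,
   1671617398644080338382340372730269411726272185674751968748245057,
   25717383889968082291985932460304207371532823050782845287268353,
   1645906293388717419444977008651661204750985852136954918250479617,
   6375205401090930235137335622548662938164741559890412044289,
   401736043934524198131843683204484659325542105897378936520705,
   401832614724698583250415250265764166277286799183488747831297,
   6278634610919399611951222019245169351303411460240249454593,
   26119118401038584500913690833231497406711801575421433363038272,
   1645912570490447051440389298912853578770116231660076146339348544,
   1645906291856590178396294119934091977349983313736240647532445760,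
   25717285834198619762217597004711114612642476776171614144299072,
   25711010264590474129445279925726236452730521879070583889854528,
   1645504655401294893357514441253671434675343240206550084918181952,
   1645906391444855091853040314743888469644246417597082808470474752,
   25717385446034631625836677821299266203087505114787544681156608,
   1645510834422947276292179315406488869197125900732161113815519232,
   26112743219208684770963186004481763829057997507855497838989312,
   1645510835955442907052371982663046690500761220532922583334785024,
   26112841298929144744850920266503826670604369484712669343649792,
   25711010264584719466742928698539132590648047953442193369464832,
   1645504655401300648019862898778381409998828357557738982193758208,
   26112744752084123269500311331947798549571726843194428570730496,
   1645510932526601378422507245721688338880622295623208127487541248]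
def GC : List (List ℕ) :=
  [[1, 3, 4, 7, 11, 12, 14, 17, 19, 27, 29, 30, 35, 37, 40],
   [0, 3, 5, 7, 11, 13, 16, 18, 21, 24, 29, 37, 41],
   [1, 7, 10, 12, 14, 17, 19, 20, 24, 29, 31, 36, 40],
   [0, 3, 5, 7, 10, 16, 19, 24, 26, 29, 31, 35, 36, 41],
   [0, 3, 7, 13, 15, 16, 18, 28, 31, 35],
   [1, 4, 7, 12, 14, 18, 21, 29, 34, 36, 41],
   [0, 3, 8, 10, 13, 14, 16, 18, 24, 26, 34, 36, 41],
   [1, 3, 5, 7, 9, 10, 12, 14, 24, 26, 30, 34, 37],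
   [1, 3, 4, 7, 9, 11, 19, 21, 24, 26, 28, 35, 37],
   [0, 3, 11, 15, 16, 21, 29, 35, 37],
   [0, 3, 5, 12, 14, 19, 20, 25, 34, 37, 40],
   [0, 3, 4, 7, 9, 13, 14, 21, 24, 26, 31, 37],
   [1, 5, 9, 13, 15, 18, 27, 29, 30, 36, 40],
   [10, 12, 14, 16, 18, 20, 22],
   [0, 2, 4, 9, 10, 12, 14, 17, 21, 24, 29],
   [0, 3, 5, 7, 9, 10, 15, 16, 18, 20, 22, 30, 33],
   [7, 8, 27, 28, 34, 37],
   [0, 7, 9, 11, 15, 17, 19, 21, 23, 30, 32],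
   [2, 6, 10, 17, 18, 21, 24, 26, 29, 30, 36, 40],
   [1, 2, 4, 7, 9, 11, 13, 14, 17, 19, 21, 23, 30],
   [0, 3, 4, 11, 12, 14, 19, 20, 25, 26, 28, 30, 34, 40],
   [3, 5, 6, 8, 10, 12, 14, 35, 37],
   [0, 3, 4, 11, 12, 14, 17, 20, 25, 26, 28, 30, 35, 37, 40],
   [3, 4, 6, 8, 14, 16, 18, 20, 22, 31, 35, 37],
   [1, 4, 7, 9, 11, 13, 14, 17, 20, 22, 31, 32, 35, 40],
   [0, 5, 7, 9, 11, 13, 15, 17, 18, 31, 33, 37, 41],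
   [1, 4, 6, 8, 11, 12, 14, 17, 19, 21, 22, 31, 36, 41],
   [2, 6, 8, 11, 17, 19, 20, 23, 30, 32, 34, 40],
   [1, 2, 4, 7, 10, 14, 17, 18, 21, 31, 33, 35, 36, 41],
   [2, 4, 9, 13, 15, 18, 21, 22, 31, 32, 35, 40],
   [1, 3, 5, 8, 11, 14, 19, 20, 23, 26, 30, 32, 36],
   [2, 5, 7, 8, 10, 13, 17, 23, 27, 30, 32, 34],
   [0, 2, 5, 6, 8, 13, 15, 16, 19, 23, 27, 30, 35, 40],
   [1, 5, 10, 13, 19, 21, 26, 30, 34, 41],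
   [1, 3, 4, 6, 8, 12, 16, 18, 21, 26, 41],
   [0, 4, 11, 16, 18, 20, 27, 30, 33, 40]]
def genL : List (ℕ × ℕ) :=
  [(6277101735386680763835789428278268817015273050450847334401, 25711010241013622487466183212515706262792298800422015505268736),
   (1645504557321206043582565409498398344696363507038858973638819904, 6375205769389342836995282542262140845074142106933492973568),
   (25711010264958865313147247501407023771326423970292736764940288, 401734511070593575783348349076877849406048062470242722381824),
   (1532495540865888943428938757384925049462390980125917184, 1645504557345525520766308485516997090745755072293003575187996672),
   (1645510932526981278954252473570379926648094496248892961687863296, 1532495540865888858379116214584750725587764764794159104),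
   (1556820866889072881560048467281515739467990117323374592, 1671623577642150020813289902347322676780478718840980972668715008),
   (25711008732463231653857703106959648729310102476631604440596480, 401832590785208992670198233469142032875886509566244467769344),
   (24319387267835503992532969253617291878497712687022080, 26112842831424595694129693610733352858699568448587085620707328),
   (25711106788238543022364389057798637945578199505390649143721984, 85091360917669057407812677500552609792),
   (1645504558854081573468864905943557914168406011344253790057398272, 26112743243153834803934846576889294248875225040525573222301696),
   (408109692514751094132403096405157981706870903620753632002048, 25711010241019467044118704867336962848931030602346565870813184),
   (1645504557345151284981347145112931788871249160385118731725963264, 25717287342754763808277900181282594478567952552468068584914944),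
   (401832614730451840652007679347638450513189113002171624849408, 6278634605164736909431182222646922790900099303027121324032),
   (306954974589506539491393, 73804990694421430272),
   (26112743219582827762866673527567046499341743256173459101712384, 1645510834446892519095559548076255581983932422850021161179283456),
   (1257282926204205036116119617, 285941742698496),
   (25717383913539180676204010794373186184247241881342089973727232, 1645906293365146321015449566197520851442582746503481213015031808),
   (5149830563428334865154757099520, 73805276566387687425),
   (25717287342380617984174156435756792891605544006218412839665664, 1645906389911985497911841633922806989475881492712635231503384576),
   (21093705987797812199098883005218816, 4398046515264),
   (1645504558877646917213040634036737711089022266190505934598438912, 25711106788238451678512140946952908609551068378086041901334528),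
   (86399819726019531813687638192644165632, 18018865292509248),
   (1645510932503030188694082854144444951743066220307727335662026752, 26112744775649377097071397620427013785391028309257571572645888),
   (353893661597776002001909609743506168877057, 74939902198582083648),
   (22300745198530623141535718272648361506242561, 5445847423249373337249122644857605591040),
   (1427253138553383130431623292341101890300280833, 1153202980674080832),
   (91343852333181756906283965195013876258768683009, 1329228075032421200282260196670050304),
   (5846006549324940900889771752140353959610560811008, 324518553663149111561900242501632),
   (374144419156712476288218330258552927557241645826113, 5444517870735034758227125853316429385728),
   (23945242826034957929719907333981808119610172380545088, 1329228075013083183321608286164226048),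
   (1532495540865894302876217841393891909183180691172491265, 1329552514338574299648604615884410880),
   (98079714615416886936263762251958362051229898502817448000, 5444517870814243582651777742351080882176),
   (6277101735386680763835789423207685763711622737696386973760, 5444518195332797236356137761162479534081),
   (401734511064747568890935041280623447866905751304222413950976, 19347536633238441047359488),
   (25711008708143844408676839324557332440686609755967251011338241, 324597801163754105236360056016896),
   (1645504557321206042154969182557675102783899619738534680782438400, 5445847098730800331360702516661936193600)]
def LC : List (List ℕ) :=
  [[0, 10], [12, 15], [0, 2, 6], [0, 11, 24], [0, 10, 28], [2, 5, 32],
   [2, 4, 37], [2, 10, 20], [4, 13, 17], [6, 16, 40], [6, 17, 41], [8, 21, 33],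
   [8, 21, 41], [12, 14, 25], [0, 2, 6, 41], [0, 5, 7, 28], [0, 4, 8, 45], [0, 11, 33, 44],
   [2, 4, 24, 28], [2, 7, 15, 29], [4, 13, 17, 41], [6, 17, 28, 32], [8, 11, 22, 25], [8, 20, 24, 28],
   [10, 21, 22, 32], [12, 17, 19, 40], [14, 18, 21, 36], [18, 23, 37, 41], [18, 23, 36, 44], [38, 42],
   [38, 43], [26, 48, 50], [26, 49, 51], [30, 60, 62], [30, 61, 63], [34, 52, 54],
   [34, 53, 55], [38, 42, 63], [38, 47, 60], [46, 64, 66], [46, 65, 67], [58, 66, 71],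
   [26, 30, 55, 56], [26, 34, 43, 62], [26, 34, 46, 61], [26, 39, 46, 65], [26, 53, 63, 66], [26, 55, 57, 67],
   [30, 35, 46, 66], [30, 50, 52, 59], [30, 57, 65, 71], [34, 49, 66, 69], [34, 51, 57, 62], [38, 53, 63, 65],
   [42, 48, 53, 58], [42, 54, 59, 63], [46, 48, 67, 71], [48, 51, 62, 71], [56, 58, 68, 70], [56, 58, 69, 71]]
def LL : List (ℕ × ℕ) :=
  [(25711008732094933241250230500980589916849733312026383851978753, 1645906291832270789746155418278966418774902134654673923063414784),
   (1532495542293485000228808207231721872097972430064058368, 25711008708143844430972138675989224781890966173177444917313536),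
   (23945334192182591791812183171061344034379888786145345, 25711106787858459825558413482260069494758865343480363057414144),
   (1645510932502656044252968402424710491255530937552821147427405825, 401734511064747568885490523090361253031463666051686095388672),
   (1645504557321580277917978226885843036049556091968134578444435457, 25717285809879232516682921972841690365057319705464285782081536),
   (1532495540865888858358347106378471697883076715727552576, 23945242848678792824703637264362573625959135693508608),
   (6277101741232687313159401096023643989238227807019957489728, 1645504557321206133498821515739107411266696337128051747864969216),
   (25711008708143844408671393477463673480696201256432452757356608, 6277102109531099920546936483350983893702263380040059191296),
   (1532495540888189603556877650291844901891387483689586688, 25711008708523834834377513306783289931477347329568629464236032),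
   (91343852334531429570949659459640802906363658240, 1532869685285045654575998900702100417915422898856656896),
   (1645504557345151285003299441167735372263836117103257285350916096, 374144419156712476288139102091241357120453988057088),
   (1532495540888189603556877650291844901891387483706359808, 1645510932502656044252620038351575259731718100849239103226511360),
   (98079714616844134627640169618678073721048798956150063104, 26112744751704132843445743688123985828611769242044057457262592),
   (6277125680720850645682382704767696243959572084115374080000, 85070591731472560627495515002486390784),
   (379991852953727464692839114792203034605678844182593, 1645504558853701583020858042244925527917960922156126045812555776),
   (19645044568737724088975361, 26112743243153834803586397412398135192610292560619169170853888),
   (25717285809879231089435229266881810544711389541349424315240449, 1427253137223835686676102296360820031486951424),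
   (26112744751704132843451186876761654457012627716332071342309377, 6277101735386680763835789423286894578616619782058652205056),
   (401734511064838912737823704517678400280130996451363145125952, 25711008708149690415220717109900603813825423546725294411874304),
   (374144419156711167829330751314678967153904047882304, 5846028850153880795168134825262362217308020277248),
   (98079714616844134627640169618678073721048798956133289984, 1645504557345151376324851030479860060797177364299399994605043712),
   (25711008708517990255075797330478705263321913181223400818081792, 23945242826029598482440902533839446837976131702882304),
   (1532501386872786631134516070310365928649926156734169088, 6277101735386680763835789423207666420824721927334753468416),
   (23945242826029513432618359752710428141403225165135872, 91344200782325159429954828579651079134043439104),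
   (6277101735386681112284933150329119105225290148759038066688, 1645504557321206043582216875263310386041021836235996504338202624),
   (374145846404405203017208832456560605836444329574400, 5846006549323611672814739330865150374497216364544),
   (324518553658426744801952576569344, 401736043566134441672121636832173527159327705098736671653888),
   (348449164496228420725806130146514474893312, 98079720461445737005073965689839228708421597316125818880),
   (5444518195253569073840738516462821441536, 1532495633636988969337100213607652447980673125159272448),
   (86420913432007329475988368457606365248, 74940179274421764096),
   (21093705987797737240905141337460736, 86399819726019531738765473385468395520),
   (1449548437904490504200128641561544424410841088, 17043456),
   (307027608362821777096704, 1449548437904490504199821688875346477472284737),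
   (99612210156282775793292556766027379787617543156651786240, 73786976294838206529),
   (1257282852399214410413899776, 99612210156282775793292556764770096935236057341517631488),
   (5937350401656793110352300196337099725331108986880, 69793480704),
   (5149830563500969205748218200065, 5937350401656793105202469632911052688856832802816),
   (5529609231731912337826982313214756257792, 98079714615416886934934209737619787825386280183308222464),
   (1532495540865888858379116293812615730763967443712868352, 348450472955036771502368519831589438357504),
   (408011612800134250003219974106274319048562695619202273771520, 18014467228962816),
   (353893661597776002001984531631236431478848, 408011612800134249649326312508498317046653103890162243338241),
   (401734535009990394915003934934462949858854108971366638157824, 1645504557321206042154969182557350584230241194164673029368447040),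
   (374144419156711147384663109076067073020511568003072, 5846006554768129543549774089092239631598816854016),
   (98079714615416886934934539326776149322698882492900835328, 5529588462465250031279855385164742918144),
   (348450473284625927863939601109991072727040, 1532495540865888858358347027150309257405715485741285376),
   (348449143727120215051241317251381486157824, 6277101735386680769280328063130135313713782110117785763840),
   (401734511064747568885490523085290650932782203349356576243712, 98079714706760744712633837378919163710874470907413266432),
   (1329227995804560917472544784369319936, 401734511444737994591525281818248707141506700043577081200640),
   (401734511064747569233939667136851428815586163609953124745216, 5444517875805617821049277807764749418496),
   (92771100027216620265811443926406375598104772608, 23945242826029513412173690852882007720825954804695104),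
   (1237944761651863144544337921, 1645510834423315573254889729493833935194489850706393839658340352),
   (401734511064747568890935040961096287789764560580956020277248, 25711008708143844430972138675989224781890967326094551477649408),
   (98079714615416886934934214808222188664516909806563360832, 374145846409849700118834403955139064390617229430784),
   (20769187434139310532140781872873472, 6375181450093441508548422936068031926036235560294824280064),
   (23945242848330343681296044248376404950960309767503872, 91343852333181432387730302044785984601981976576),
   (5846006549408682589063527609880069277982314987520, 98103659858242916449675286905703927205497153678815002624),
   (22649194342257743356284728134996085698461696, 1645906291832270789723854673080435795652709229495859628369514497),
   (98079714615439193124650935693558559824856791907831906304, 1645504557321206043582216875263310386041021835083079397777866752),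
   (1671215566053669273808826800593718422239490062981460741205262400, 1152925902653358081),
   (24319387245186224558909315616398949447074717515382784, 1671215566029349886563640576034809106623091113534104618523430912)]

def addP (p n p' n' : ℕ) : ℕ :=
  Nat.land (Nat.lor (Nat.xor p p') (Nat.land n n'))
    (Nat.xor (Nat.lor (Nat.xor p p') (Nat.land n n')) (Nat.lor (Nat.xor n n') (Nat.land p p')))

def memL (p n : ℕ) : List (ℕ × ℕ) → Bool
  | [] => false
  | a :: l => ((Nat.beq a.1 p && Nat.beq a.2 n) || (Nat.beq a.1 n && Nat.beq a.2 p)) || memL p n l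

def chk (p n : ℕ) : Bool :=
  Nat.ble 10 (Nat.mod (Nat.lor p n) 63) || ((Nat.beq p 0 && Nat.beq n 0) || memL p n LL)

def srch : List (ℕ × ℕ) → ℕ → ℕ → ℕ → Bool
  | [], _, p, n => chk p n
  | g :: gs, b, p, n =>
    Nat.rec (chk p n) (fun b' _ => (srch gs b p n &&
      srch gs b' (addP p n g.1 g.2) (addP n p g.2 g.1)) &&
      srch gs b' (addP p n g.2 g.1) (addP n p g.1 g.2)) b

def gK (k : Fin 36) : ℕ × ℕ := genL.getD k (0, 0)

def srch0 : List (ℕ × ℕ) → ℕ → Bool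
  | [], _ => true
  | g :: gs, b => srch0 gs b && srch gs b g.1 g.2

/-- Packing of a Boolean vector, one bit per base-64 digit. -/
def pk : (k : ℕ) → (Fin k → Bool) → ℕ
  | 0, _ => 0
  | k + 1, f => 2 ^ 6 * pk k (fun i => f i.succ) + (f 0).toNat

theorem pk_land (k : ℕ) (f g : Fin k → Bool) :
    Nat.land (pk k f) (pk k g) = pk k (fun i => f i && g i) := by
  induction k with
  | zero => simp only [pk]; decide
  | succ k ih =>
    simp only [pk, ← ih]
    refine Nat.eq_of_testBit_eq fun j => ?_
    have h1 : (f 0).toNat < 2 ^ 6 := by cases f 0 <;> decide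
    have h2 : (g 0).toNat < 2 ^ 6 := by cases g 0 <;> decide
    have h3 : (f 0 && g 0).toNat < 2 ^ 6 := by cases f 0 <;> cases g 0 <;> decide
    change ((_ : ℕ) &&& _).testBit j = (2 ^ 6 * (_ &&& _) + _).testBit j
    rw [Nat.testBit_and, Nat.testBit_two_pow_mul_add _ h1, Nat.testBit_two_pow_mul_add _ h2,
      Nat.testBit_two_pow_mul_add _ h3, Nat.testBit_and]
    split
    · cases f 0 <;> cases g 0 <;> simp
    · rfl

theorem pk_lor (k : ℕ) (f g : Fin k → Bool) :
    Nat.lor (pk k f) (pk k g) = pk k (fun i => f i || g i) := by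
  induction k with
  | zero => simp only [pk]; decide
  | succ k ih =>
    simp only [pk, ← ih]
    refine Nat.eq_of_testBit_eq fun j => ?_
    have h1 : (f 0).toNat < 2 ^ 6 := by cases f 0 <;> decide
    have h2 : (g 0).toNat < 2 ^ 6 := by cases g 0 <;> decide
    have h3 : (f 0 || g 0).toNat < 2 ^ 6 := by cases f 0 <;> cases g 0 <;> decide
    change ((_ : ℕ) ||| _).testBit j = (2 ^ 6 * (_ ||| _) + _).testBit j
    rw [Nat.testBit_or, Nat.testBit_two_pow_mul_add _ h1, Nat.testBit_two_pow_mul_add _ h2,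
      Nat.testBit_two_pow_mul_add _ h3, Nat.testBit_or]
    split
    · cases f 0 <;> cases g 0 <;> simp
    · rfl

theorem pk_xor (k : ℕ) (f g : Fin k → Bool) :
    Nat.xor (pk k f) (pk k g) = pk k (fun i => f i ^^ g i) := by
  induction k with
  | zero => simp only [pk]; decide
  | succ k ih =>
    simp only [pk, ← ih]
    refine Nat.eq_of_testBit_eq fun j => ?_
    have h1 : (f 0).toNat < 2 ^ 6 := by cases f 0 <;> decide
    have h2 : (g 0).toNat < 2 ^ 6 := by cases g 0 <;> decide
    have h3 : (f 0 ^^ g 0).toNat < 2 ^ 6 := by cases f 0 <;> cases g 0 <;> decide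
    change ((_ : ℕ) ^^^ _).testBit j = (2 ^ 6 * (_ ^^^ _) + _).testBit j
    rw [Nat.testBit_xor, Nat.testBit_two_pow_mul_add _ h1, Nat.testBit_two_pow_mul_add _ h2,
      Nat.testBit_two_pow_mul_add _ h3, Nat.testBit_xor]
    split
    · cases f 0 <;> cases g 0 <;> simp
    · rfl

theorem pk_inj (k : ℕ) (f g : Fin k → Bool) (h : pk k f = pk k g) : f = g := by
  induction k with
  | zero => exact funext fun i => i.elim0
  | succ k ih =>
    simp only [pk] at h
    have h1 : (f 0).toNat ≤ 1 := Bool.toNat_le _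
    have h2 : (g 0).toNat ≤ 1 := Bool.toNat_le _
    have h3 := ih (fun i => f i.succ) (fun i => g i.succ) (by omega)
    have h4 : (f 0).toNat = (g 0).toNat := by omega
    have h5 : f 0 = g 0 := by revert h4; cases f 0 <;> cases g 0 <;> decide
    funext i
    refine Fin.cases h5 (fun j => ?_) i
    exact congrFun h3 j

theorem pk_modEq (k : ℕ) (f : Fin k → Bool) :
    pk k f ≡ (Finset.univ.filter fun i => f i = true).card [MOD 63] := by
  rw [Finset.card_filter]
  induction k with
  | zero => rfl
  | succ k ih =>
    rw [Fin.sum_univ_succ, add_comm (ite _ _ _)]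
    have h : (f 0).toNat = if f 0 = true then 1 else 0 := by cases f 0 <;> rfl
    simp only [pk, h]
    refine Nat.ModEq.add ?_ rfl
    have := Nat.ModEq.mul (show 2 ^ 6 ≡ 1 [MOD 63] from rfl) (ih fun i => f i.succ)
    simpa using this

theorem pk_mod (f : Fin 36 → Bool) :
    Nat.mod (pk 36 f) 63 = (Finset.univ.filter fun i => f i = true).card := by
  have h := pk_modEq 36 f
  have h2 : (Finset.univ.filter fun i => f i = true).card ≤ 36 := by
    simpa using Finset.card_le_univ (Finset.univ.filter fun i => f i = true)
  have h3 : pk 36 f % 63 = (Finset.univ.filter fun i => f i = true).card % 63 := h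
  exact h3.trans (Nat.mod_eq_of_lt (by omega))

abbrev V := Fin 36 → ZMod 3

def P (v : V) : ℕ := pk 36 fun i => decide (v i = 1)
def N (v : V) : ℕ := pk 36 fun i => decide (v i = 2)

theorem P_neg (v : V) : P (-v) = N v := by
  unfold P N; congr 1; funext i
  have : ∀ a : ZMod 3, decide (-a = 1) = decide (a = 2) := by decide
  exact this _

theorem N_neg (v : V) : N (-v) = P v := by
  rw [← P_neg, neg_neg]

theorem P_add (v w : V) : P (v + w) = addP (P v) (N v) (P w) (N w) := by
  unfold P N addP
  simp only [pk_land, pk_lor, pk_xor]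
  congr 1; funext i
  have key : ∀ a b : ZMod 3, decide (a + b = 1) =
      ((decide (a = 1) ^^ decide (b = 1) || decide (a = 2) && decide (b = 2)) &&
        ((decide (a = 1) ^^ decide (b = 1) || decide (a = 2) && decide (b = 2)) ^^
          (decide (a = 2) ^^ decide (b = 2) || decide (a = 1) && decide (b = 1)))) := by decide
  exact key _ _

theorem N_add (v w : V) : N (v + w) = addP (N v) (P v) (N w) (P w) := by
  rw [← P_neg, neg_add, P_add, P_neg, P_neg, N_neg, N_neg]

theorem P_sub (v w : V) : P (v - w) = addP (P v) (N v) (N w) (P w) := by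
  rw [sub_eq_add_neg, P_add, P_neg, N_neg]

theorem N_sub (v w : V) : N (v - w) = addP (N v) (P v) (P w) (N w) := by
  rw [sub_eq_add_neg, N_add, P_neg, N_neg]

theorem P_zero : P 0 = 0 := by decide +kernel
theorem N_zero : N 0 = 0 := by decide +kernel

theorem PN_inj {v w : V} (h1 : P v = P w) (h2 : N v = N w) : v = w := by
  have h1 := pk_inj _ _ _ h1
  have h2 := pk_inj _ _ _ h2
  funext i
  have h1 := congrFun h1 i
  have h2 := congrFun h2 i
  have key : ∀ a b : ZMod 3, decide (a = 1) = decide (b = 1) →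
      decide (a = 2) = decide (b = 2) → a = b := by decide
  exact key _ _ h1 h2

theorem wt_eq (v : V) : Nat.mod (Nat.lor (P v) (N v)) 63 = hammingNorm v := by
  unfold P N
  rw [pk_lor, pk_mod]
  unfold hammingNorm
  congr 1; ext i
  simp only [Finset.mem_filter, Finset.mem_univ, true_and]
  have key : ∀ a : ZMod 3, (decide (a = 1) || decide (a = 2)) = true ↔ a ≠ 0 := by decide
  exact key _

/-- Signed sums: `2 * i` stands for `r i`, `2 * i + 1` for `- r i`. -/
def vcomb (r : ℕ → V) : List ℕ → V
  | [] => 0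
  | c :: l => vcomb r l + (if c % 2 = 0 then r (c / 2) else - r (c / 2))

def pcomb (r : ℕ → ℕ × ℕ) : List ℕ → ℕ × ℕ
  | [] => (0, 0)
  | c :: l =>
    if c % 2 = 0 then
      (addP (pcomb r l).1 (pcomb r l).2 (r (c / 2)).1 (r (c / 2)).2,
       addP (pcomb r l).2 (pcomb r l).1 (r (c / 2)).2 (r (c / 2)).1)
    else
      (addP (pcomb r l).1 (pcomb r l).2 (r (c / 2)).2 (r (c / 2)).1,
       addP (pcomb r l).2 (pcomb r l).1 (r (c / 2)).1 (r (c / 2)).2)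

theorem comb_eq (R : ℕ → V) (r : ℕ → ℕ × ℕ) (h : ∀ i, (P (R i), N (R i)) = r i) (l : List ℕ) :
    (P (vcomb R l), N (vcomb R l)) = pcomb r l := by
  induction l with
  | nil => simp only [vcomb, pcomb, P_zero, N_zero]
  | cons c l ih =>
    simp only [vcomb, pcomb, ← ih, ← h]
    split
    · rw [P_add, N_add]
    · rw [← sub_eq_add_neg, P_sub, N_sub]

theorem comb_mem (C : Submodule (ZMod 3) V) (R : ℕ → V) (h : ∀ i, R i ∈ C) (l : List ℕ) :
    vcomb R l ∈ C := by
  induction l with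
  | nil => exact C.zero_mem
  | cons c l ih =>
    simp only [vcomb]
    split
    · exact C.add_mem ih (h _)
    · exact C.add_mem ih (C.neg_mem (h _))

def R (i : ℕ) : V := if h : i < 36 then A120 ⟨i, h⟩ else 0

theorem R_mem (i : ℕ) : R i ∈ C120 := by
  unfold R
  split
  · exact Submodule.subset_span ⟨_, rfl⟩
  · exact C120.zero_mem

theorem rows_pack : ∀ i : Fin 36, P (A120 i) = RL.getD i 0 ∧ N (A120 i) = 0 := by decide +kernel

theorem R_pack (i : ℕ) : (P (R i), N (R i)) = (RL.getD i 0, 0) := by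
  unfold R
  split
  · next h => rw [(rows_pack ⟨i, h⟩).1, (rows_pack ⟨i, h⟩).2]
  · next h =>
    rw [P_zero, N_zero, List.getD_eq_default]
    exact not_lt.1 h

def gen (i : ℕ) : V := vcomb R (GC.getD i [])

theorem gen_mem (i : ℕ) : gen i ∈ C120 := comb_mem _ _ R_mem _

theorem gen_pack_aux : ∀ i : Fin 36,
    pcomb (fun i => (RL.getD i 0, 0)) (GC.getD i []) = genL.getD i (0, 0) := by decide +kernel

theorem gen_pack (i : ℕ) : (P (gen i), N (gen i)) = genL.getD i (0, 0) := by
  unfold gen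
  rw [comb_eq R _ R_pack]
  by_cases h : i < 36
  · exact gen_pack_aux ⟨i, h⟩
  · rw [List.getD_eq_default GC _ (not_lt.1 h), List.getD_eq_default genL _ (not_lt.1 h)]
    rfl

theorem gen_P (k : Fin 36) : P (gen k) = (gK k).1 := congrArg Prod.fst (gen_pack k)
theorem gen_N (k : Fin 36) : N (gen k) = (gK k).2 := congrArg Prod.snd (gen_pack k)

/-- unit property -/
theorem unit_aux (T : List (Fin 36))
    (h : ∀ k ∈ T, Nat.land (gK k).1 (pk 36 fun j => decide (j ∈ T)) = pk 36 (fun j => decide (j = k))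
      ∧ Nat.land (gK k).2 (pk 36 fun j => decide (j ∈ T)) = pk 36 (fun _ => false)) :
    ∀ k ∈ T, ∀ j ∈ T, gen k j = if j = k then 1 else 0 := by
  intro k hk j hj
  obtain ⟨h1, h2⟩ := h k hk
  rw [← gen_P, P, pk_land] at h1
  rw [← gen_N, N, pk_land] at h2
  have h1 := congrFun (pk_inj _ _ _ h1) j
  have h2 := congrFun (pk_inj _ _ _ h2) j
  simp only [hj, decide_true, Bool.and_true] at h1 h2
  revert h1 h2
  generalize gen k j = a
  by_cases e : j = k
  · simp only [e]; revert a; decide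
  · simp only [e]; revert a; decide

theorem unit_I : ∀ k ∈ TI, ∀ j ∈ TI, gen k j = if j = k then 1 else 0 :=
  unit_aux TI (by decide +kernel)
theorem unit_J : ∀ k ∈ TJ, ∀ j ∈ TJ, gen k j = if j = k then 1 else 0 :=
  unit_aux TJ (by decide +kernel)

theorem nodup_I : TI.Nodup := by decide +kernel
theorem nodup_J : TJ.Nodup := by decide +kernel
theorem perm_IJ : (TI ++ TJ).Perm (List.finRange 36) := by decide +kernel
theorem mem_IJ (k : Fin 36) : k ∈ TI ∨ k ∈ TJ := by
  have := perm_IJ.mem_iff (a := k)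
  simpa using this

/-- rows are pairwise orthogonal -/
theorem zero_one : ∀ i j : Fin 36, A120 i j = 0 ∨ A120 i j = 1 := by
  intro i j
  have h := congrFun (pk_inj _ _ _ ((rows_pack i).2.trans N_zero.symm)) j
  have key : ∀ a : ZMod 3, decide (a = 2) = decide ((0 : ZMod 3) = 2) → a = 0 ∨ a = 1 := by decide
  exact key _ h

theorem RL_land : ∀ i j : Fin 36, Nat.mod (Nat.land (RL.getD i 0) (RL.getD j 0)) 63 % 3 = 0 := by
  decide +kernel

theorem RL_wt : ∀ i : Fin 36, Nat.mod (RL.getD i 0) 63 = 15 := by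
  decide +kernel

theorem row_orth (i j : Fin 36) : ∑ k, A120 i k * A120 j k = 0 := by
  have h : ∀ k, A120 i k * A120 j k
      = ((if (decide (A120 i k = 1) && decide (A120 j k = 1)) = true then 1 else 0 : ℕ) : ZMod 3) := by
    intro k
    rcases zero_one i k with h | h <;> rcases zero_one j k with h' | h' <;> rw [h, h'] <;> decide
  simp only [h]
  rw [← Nat.cast_sum, ← Finset.card_filter, ← pk_mod, ← pk_land, ZMod.natCast_eq_zero_iff]
  have := RL_land i j
  rw [← (rows_pack i).1, ← (rows_pack j).1] at this
  exact Nat.dvd_of_mod_eq_zero this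

theorem orth_rows (x : V) (h : ∀ i, ∑ k, x k * A120 i k = 0) :
    ∀ y ∈ C120, ∑ k, x k * y k = 0 := by
  intro y hy
  unfold C120 at hy
  induction hy using Submodule.span_induction with
  | mem y hy => obtain ⟨i, rfl⟩ := hy; exact h i
  | zero => simp
  | add a b _ _ ha hb => simp only [Pi.add_apply, mul_add, Finset.sum_add_distrib, ha, hb, add_zero]
  | smul c a _ ha =>
    simp only [Pi.smul_apply, smul_eq_mul, mul_left_comm _ c, ← Finset.mul_sum, ha, mul_zero]

theorem C_orth (x : V) (hx : x ∈ C120) : ∀ y ∈ C120, ∑ k, x k * y k = 0 := by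
  refine orth_rows x fun i => ?_
  have := orth_rows (A120 i) (fun j => row_orth i j) x hx
  simpa only [mul_comm] using this

def lc (T : List (Fin 36)) (x : V) : V := (T.map fun k => x k • gen k).sum

theorem lc_mem (T : List (Fin 36)) (x : V) : lc T x ∈ C120 := by
  refine list_sum_mem fun y hy => ?_
  obtain ⟨k, _, rfl⟩ := List.mem_map.1 hy
  exact C120.smul_mem _ (gen_mem _)

theorem lc_apply (T : List (Fin 36)) (hn : T.Nodup)
    (hT : ∀ k ∈ T, ∀ j ∈ T, gen k j = if j = k then 1 else 0) (x : V) (j : Fin 36) (hj : j ∈ T) :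
    lc T x j = x j := by
  unfold lc
  rw [← List.sum_toFinset _ hn, Finset.sum_apply, Finset.sum_eq_single j]
  · simp [hT j hj j hj]
  · intro k hk hkj
    simp [hT k (List.mem_toFinset.1 hk) j hj, Ne.symm hkj]
  · intro h; exact absurd (List.mem_toFinset.2 hj) h

/-- A vector orthogonal to the code is recovered from its coordinates in `T`. -/
theorem recover (T T' : List (Fin 36)) (hn : T.Nodup)
    (hT : ∀ k ∈ T, ∀ j ∈ T, gen k j = if j = k then 1 else 0)
    (hT' : ∀ k ∈ T', ∀ j ∈ T', gen k j = if j = k then 1 else 0)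
    (hm : ∀ k, k ∈ T ∨ k ∈ T') (x : V) (hx : ∀ y ∈ C120, ∑ i, x i * y i = 0) :
    x = lc T x := by
  have hy : ∀ y ∈ C120, ∑ i, (x i - lc T x i) * y i = 0 := by
    intro y hy
    simp only [sub_mul, Finset.sum_sub_distrib, hx y hy, C_orth _ (lc_mem T x) y hy, sub_zero]
  have hz : ∀ j ∈ T, x j - lc T x j = 0 := fun j hj => by rw [lc_apply T hn hT x j hj, sub_self]
  funext j
  rw [← sub_eq_zero]
  by_cases hj : j ∈ T
  · exact hz j hj
  have hj' := (hm j).resolve_left hj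
  have := hy _ (gen_mem j)
  rw [Finset.sum_eq_single j] at this
  · simpa [hT' j hj' j hj'] using this
  · intro k _ hk
    by_cases hkT : k ∈ T
    · rw [hz k hkT, zero_mul]
    · rw [hT' j hj' k ((hm k).resolve_left hkT), if_neg hk, mul_zero]
  · simp

theorem recI (x : V) (hx : ∀ y ∈ C120, ∑ i, x i * y i = 0) : x = lc TI x :=
  recover TI TJ nodup_I unit_I unit_J mem_IJ x hx
theorem recJ (x : V) (hx : ∀ y ∈ C120, ∑ i, x i * y i = 0) : x = lc TJ x :=
  recover TJ TI nodup_J unit_J unit_I (fun k => (mem_IJ k).symm) x hx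

theorem selfDual : IsSelfDualCode C120 := by
  intro x
  refine ⟨C_orth x, fun h => ?_⟩
  rw [recI x h]; exact lc_mem _ _

/-- soundness of the search -/
theorem srch_sound (x : V) (T : List (Fin 36)) : ∀ (b : ℕ) (v : V),
    srch (T.map gK) b (P v) (N v) = true → T.countP (fun k => decide (x k ≠ 0)) ≤ b →
    chk (P (v + lc T x)) (N (v + lc T x)) = true := by
  induction T with
  | nil => intro b v h _; simpa [lc, srch] using h
  | cons k T ih =>
    intro b v h hc
    have e : lc (k :: T) x = x k • gen k + lc T x := by simp [lc]
    cases b with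
    | zero =>
      have hz : lc (k :: T) x = 0 := by
        unfold lc
        refine List.sum_eq_zero fun y hy => ?_
        obtain ⟨j, hj, rfl⟩ := List.mem_map.1 hy
        have := List.countP_eq_zero.1 (Nat.le_zero.1 hc) j hj
        simp only [ne_eq, decide_not, Bool.not_eq_true',
          decide_eq_false_iff_not, not_not] at this
        rw [this, zero_smul]
      rw [hz, add_zero]; exact h
    | succ b =>
      have h' : ((srch (T.map gK) (b + 1) (P v) (N v) &&
        srch (T.map gK) b (addP (P v) (N v) (gK k).1 (gK k).2) (addP (N v) (P v) (gK k).2 (gK k).1)) &&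
        srch (T.map gK) b (addP (P v) (N v) (gK k).2 (gK k).1) (addP (N v) (P v) (gK k).1 (gK k).2))
          = true := h
      rw [← gen_P, ← gen_N, ← P_add, ← N_add, ← P_sub, ← N_sub, Bool.and_eq_true,
        Bool.and_eq_true] at h'
      obtain ⟨⟨h0, h1⟩, h2⟩ := h'
      rw [List.countP_cons] at hc
      have tri : ∀ a : ZMod 3, a = 0 ∨ a = 1 ∨ a = -1 := by decide
      rcases tri (x k) with ha | ha | ha
      · rw [e, ha, zero_smul, zero_add]
        exact ih _ _ h0 (by simpa [ha] using hc)
      · rw [e, ha, one_smul, ← add_assoc]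
        exact ih _ _ h1 (by simpa [ha] using hc)
      · rw [e, ha, neg_one_smul, ← add_assoc, ← sub_eq_add_neg]
        exact ih _ _ h2 (by simpa [ha] using hc)

theorem memL_iff (p n : ℕ) (l : List (ℕ × ℕ)) :
    memL p n l = true ↔ (p, n) ∈ l ∨ (n, p) ∈ l := by
  induction l with
  | nil => simp [memL]
  | cons a l ih =>
    simp only [memL, Bool.or_eq_true, Bool.and_eq_true, Nat.beq_eq, ih, List.mem_cons]
    obtain ⟨a, b⟩ := a
    simp only [Prod.mk.injEq]
    grind

theorem chk_spec (v : V) (h : chk (P v) (N v) = true) (hw : hammingNorm v ≤ 9) (h0 : v ≠ 0) :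
    (P v, N v) ∈ LL ∨ (N v, P v) ∈ LL := by
  unfold chk at h
  rw [wt_eq, Bool.or_eq_true, Bool.or_eq_true, memL_iff, Bool.and_eq_true, Nat.beq_eq, Nat.beq_eq] at h
  rcases h with h | ⟨h1, h2⟩ | h
  · have := Nat.le_of_ble_eq_true h
    omega
  · exact absurd (PN_inj (h1.trans P_zero.symm) (h2.trans N_zero.symm)) h0
  · exact h

theorem lc_neg (T : List (Fin 36)) (x : V) : lc T (-x) = - lc T x := by
  induction T with
  | nil => simp [lc]
  | cons k T ih =>
    simp only [lc, List.map_cons, List.sum_cons] at ih ⊢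
    rw [ih, Pi.neg_apply, neg_smul, neg_add]

theorem srch0_sound (b : ℕ) (x : V) (T : List (Fin 36)) (h : srch0 (T.map gK) b = true)
    (hc : T.countP (fun k => decide (x k ≠ 0)) ≤ b + 1) (hw : hammingNorm (lc T x) ≤ 9)
    (h0 : lc T x ≠ 0) :
    (P (lc T x), N (lc T x)) ∈ LL ∨ (N (lc T x), P (lc T x)) ∈ LL := by
  induction T with
  | nil => exact absurd rfl h0
  | cons k T ih =>
    have e : ∀ x : V, lc (k :: T) x = x k • gen k + lc T x := fun x => by simp [lc]
    have h' : (srch0 (T.map gK) b && srch (T.map gK) b (gK k).1 (gK k).2) = true := h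
    rw [Bool.and_eq_true, ← gen_P, ← gen_N] at h'
    rw [List.countP_cons] at hc
    have tri : ∀ a : ZMod 3, a = 0 ∨ a = 1 ∨ a = -1 := by decide
    rcases tri (x k) with ha | ha | ha
    · rw [e, ha, zero_smul, zero_add] at hw h0 ⊢
      exact ih h'.1 (by simpa [ha] using hc) hw h0
    · have := srch_sound x T b _ h'.2 (by simpa [ha] using hc)
      have e1 : gen k + lc T x = lc (k :: T) x := by rw [e, ha, one_smul]
      rw [e1] at this
      exact chk_spec _ this hw h0
    · have := srch_sound (-x) T b _ h'.2 (by simpa [ha] using hc)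
      have e1 : gen k + lc T (-x) = - lc (k :: T) x := by
        rw [← lc_neg, e, Pi.neg_apply, ha, neg_neg, one_smul]
      rw [e1] at this
      have := chk_spec _ this (by
        have e2 : hammingNorm (-lc (k :: T) x) = hammingNorm (lc (k :: T) x) := by
          simp [hammingNorm]
        rw [e2]; exact hw) (neg_ne_zero.2 h0)
      rw [P_neg, N_neg] at this
      exact this.symm

theorem srchI : srch0 (TI.map gK) 3 = true := by decide +kernel
theorem srchJ : srch0 (TJ.map gK) 3 = true := by decide +kernel

theorem count_IJ (x : V) : TI.countP (fun k => decide (x k ≠ 0)) +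
    TJ.countP (fun k => decide (x k ≠ 0)) = hammingNorm x := by
  rw [← List.countP_append, perm_IJ.countP_eq]
  rw [List.countP_eq_length_filter]
  unfold hammingNorm
  rw [← List.toFinset_card_of_nodup ((List.nodup_finRange 36).filter _)]
  congr 1
  ext k
  simp

theorem low_weight (x : V) (hx : x ∈ C120) (h0 : x ≠ 0) (hw : hammingNorm x ≤ 9) :
    (P x, N x) ∈ LL ∨ (N x, P x) ∈ LL := by
  have hc := count_IJ x
  have ho := C_orth x hx
  by_cases h : TI.countP (fun k => decide (x k ≠ 0)) ≤ 4
  · have e := recI x ho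
    have := srch0_sound 3 x TI srchI h (by rw [← e]; exact hw) (by rw [← e]; exact h0)
    rwa [← e] at this
  · have e := recJ x ho
    have := srch0_sound 3 x TJ srchJ (by omega) (by rw [← e]; exact hw) (by rw [← e]; exact h0)
    rwa [← e] at this

/-- the listed words are codewords of weight 9 -/
theorem LL_eq : LC.map (pcomb fun i => genL.getD i (0, 0)) = LL := by decide +kernel

theorem LL_wt : ∀ a ∈ LL, Nat.mod (Nat.lor a.1 a.2) 63 = 9 := by decide +kernel

theorem LL_code (a : ℕ × ℕ) (ha : a ∈ LL) :
    ∃ x ∈ C120, hammingNorm x = 9 ∧ (P x, N x) = a := by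
  have hw := LL_wt a ha
  rw [← LL_eq] at ha
  obtain ⟨l, _, rfl⟩ := List.mem_map.1 ha
  have e := comb_eq gen _ gen_pack l
  refine ⟨vcomb gen l, comb_mem _ _ gen_mem _, ?_, e⟩
  rw [← e, wt_eq] at hw
  exact hw

def L2 : List (ℕ × ℕ) := LL ++ LL.map Prod.swap

theorem L2_nodup : L2.Nodup := by decide +kernel

theorem low9 (x : V) (hx : x ∈ C120) (h0 : x ≠ 0) (hw : hammingNorm x ≤ 9) :
    hammingNorm x = 9 := by
  rcases low_weight x hx h0 hw with h | h
  · obtain ⟨y, _, hy, e⟩ := LL_code _ h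
    rw [Prod.mk.injEq] at e
    rw [← PN_inj e.1 e.2, hy]
  · obtain ⟨y, _, hy, e⟩ := LL_code _ h
    rw [Prod.mk.injEq] at e
    have := wt_eq x
    rw [← hy, ← wt_eq x, ← wt_eq y, e.1, e.2]
    exact congrArg (fun t => Nat.mod t 63) (Nat.lor_comm _ _)

theorem set_image : (fun x : V => (P x, N x)) '' {x | x ∈ C120 ∧ hammingNorm x = 9}
    = ↑(L2.toFinset) := by
  ext ⟨p, n⟩
  simp only [Set.mem_image, Set.mem_ofPred_eq, List.coe_toFinset, L2, List.mem_append,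
    List.mem_map]
  constructor
  · rintro ⟨x, ⟨hx, hw⟩, e⟩
    have h0 : x ≠ 0 := by rintro rfl; simp at hw
    rw [← e]
    rcases low_weight x hx h0 hw.le with h | h
    · exact Or.inl h
    · exact Or.inr ⟨_, h, rfl⟩
  · rintro (h | ⟨⟨a, b⟩, h, e⟩)
    · obtain ⟨x, hx, hw, e⟩ := LL_code _ h
      exact ⟨x, ⟨hx, hw⟩, e⟩
    · obtain ⟨x, hx, hw, e'⟩ := LL_code _ h
      refine ⟨-x, ⟨C120.neg_mem hx, ?_⟩, ?_⟩
      · rw [← hw]; simp [hammingNorm]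
      · simp only [P_neg, N_neg]
        rw [← e, ← e']; rfl

theorem A9_eq : A9 C120 = 120 := by
  unfold A9
  change Nat.card ({x : V | x ∈ C120 ∧ hammingNorm x = 9} : Set V) = 120
  rw [Nat.card_coe_set_eq, ← Set.ncard_image_of_injective (f := fun x : V => (P x, N x)),
    set_image, Set.ncard_coe_finset, List.toFinset_card_of_nodup L2_nodup]
  · decide +kernel
  · intro x y h
    simp only [Prod.mk.injEq] at h
    exact PN_inj h.1 h.2

theorem minWt : MinWeightNine C120 := by
  constructor
  · obtain ⟨a, ha⟩ : ∃ a, a ∈ LL := ⟨_, List.mem_cons_self⟩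
    obtain ⟨x, hx, hw, _⟩ := LL_code a ha
    exact ⟨x, hx, by rintro rfl; simp at hw, hw⟩
  · rintro w ⟨x, hx, h0, rfl⟩
    by_contra h
    have := low9 x hx h0 (by omega)
    omega

theorem row_wt (i : Fin 36) : (Finset.univ.filter fun j => A120 i j = 1).card = 15 := by
  have h := RL_wt i
  rw [← (rows_pack i).1, P, pk_mod] at h
  simpa only [decide_eq_true_eq] using h

theorem cP_eq : ∀ x : Fin 36, pk 36 (fun i => decide (A120 i x = 1)) = cL.getD x 0 := by
  decide +kernel

theorem cL_land : ∀ x y : Fin 36, x ≠ y →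
    Nat.mod (Nat.land (cL.getD x 0) (cL.getD y 0)) 63 = 6 := by
  decide +kernel

theorem col_wt (x y : Fin 36) (h : x ≠ y) :
    (Finset.univ.filter fun i => A120 i x = 1 ∧ A120 i y = 1).card = 6 := by
  have h := cL_land x y h
  rw [← cP_eq, ← cP_eq, pk_land, pk_mod] at h
  simpa only [Bool.and_eq_true, decide_eq_true_eq] using h

end T36

theorem appendix_matrix_A9_eq_120 :
    (∀ i : Fin 36, (Finset.univ.filter fun j => A120 i j = 1).card = 15) ∧
    (∀ x y : Fin 36, x ≠ y →
      (Finset.univ.filter fun i => A120 i x = 1 ∧ A120 i y = 1).card = 6) ∧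
    IsSelfDualCode C120 ∧ MinWeightNine C120 ∧ A9 C120 = 120 := by
  exact ⟨T36.row_wt, T36.col_wt, T36.selfDual, T36.minWt, T36.A9_eq⟩
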